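/- If D ⊆ ℝℙⁿ is an open convex set, then its elliptic tube D^e ⊆ ℂℙⁿ is ℂ-convex. -/

import Mathlib

open scoped ComplexConjugate

noncomputable section

abbrev RV (n : ℕ) : Type := Fin (n + 1) → ℝ
abbrev CV (n : ℕ) : Type := Fin (n + 1) → ℂ
abbrev RP (n : ℕ) : Type := Projectivization ℝ (RV n)
abbrev CP (n : ℕ) : Type := Projectivization ℂ (CV n)

/-- The quotient topology on a projectivization. -/
instance projTopology {K V : Type*} [DivisionRing K] [AddCommGroup V] [Module K V]
    [TopologicalSpace V] : TopologicalSpace (Projectivization K V) :=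
  inferInstanceAs (TopologicalSpace (Quotient (projectivizationSetoid K V)))

/-- Complexification of a real vector. -/
def cplx {n : ℕ} (v : RV n) : CV n := fun i => (v i : ℂ)

/-- The closed (possibly degenerate) projective segment spanned by two lifts. -/
def realSeg {n : ℕ} (v₀ v₁ : RV n) : Set (RP n) :=
  {x | ∃ c₀ c₁ : ℝ, 0 ≤ c₀ * c₁ ∧ ∃ h : c₀ • v₀ + c₁ • v₁ ≠ 0,
    x = Projectivization.mk ℝ (c₀ • v₀ + c₁ • v₁) h}

/-- The elliptic tube over the closed segment determined by the lifts `v₀ v₁`. -/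
def segTube {n : ℕ} (v₀ v₁ : RV n) : Set (CP n) :=
  {z | ∃ c₀ c₁ : ℂ, 0 ≤ (c₀ * conj c₁).re ∧ ∃ h : c₀ • cplx v₀ + c₁ • cplx v₁ ≠ 0,
    z = Projectivization.mk ℂ (c₀ • cplx v₀ + c₁ • cplx v₁) h}

/-- The elliptic tube over a subset `D` of real projective space: the union of the tubes
over all closed segments contained in `D`. -/
def eTube {n : ℕ} (D : Set (RP n)) : Set (CP n) :=
  ⋃ (v₀ : RV n) (v₁ : RV n) (_ : v₀ ≠ 0) (_ : v₁ ≠ 0) (_ : realSeg v₀ v₁ ⊆ D),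
    segTube v₀ v₁

/-- Real projective lines. -/
def isLineR {n : ℕ} (L : Set (RP n)) : Prop :=
  ∃ W : Submodule ℝ (RV n), Module.finrank ℝ W = 2 ∧ L = {x | x.rep ∈ W}

/-- Convexity in real projective space: the set contains no projective line and its
intersection with every projective line is connected. -/
def convexR {n : ℕ} (D : Set (RP n)) : Prop :=
  (∀ L, isLineR L → ¬ L ⊆ D) ∧ ∀ L, isLineR L → IsPreconnected (D ∩ L)

/-- Complex projective lines in `ℂℙⁿ`. -/
def isLineC {n : ℕ} (L : Set (CP n)) : Prop :=
  ∃ W : Submodule ℂ (CV n), Module.finrank ℂ W = 2 ∧ L = {z | z.rep ∈ W}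

/-- ℂ-convexity: the set contains no complex projective line, and its intersection with
every complex projective line is connected and simply connected. -/
def cConvex {n : ℕ} (E : Set (CP n)) : Prop :=
  (∀ L, isLineC L → ¬ L ⊆ E) ∧
    ∀ L, isLineC L → IsPreconnected (E ∩ L) ∧
      ((E ∩ L).Nonempty → SimplyConnectedSpace ↥(E ∩ L))

section EllipticTube

open Set Topology

/-! ### The quotient map onto a projectivization -/

theorem isOpenQuotientMap_mk' {K V : Type*} [DivisionRing K] [AddCommGroup V] [Module K V]
    [TopologicalSpace V] [ContinuousConstSMul K V] :
    IsOpenQuotientMap (Projectivization.mk' K : {v : V // v ≠ 0} → Projectivization K V) := by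
  refine ⟨Quotient.mk_surjective, continuous_quotient_mk', fun U hU => ?_⟩
  change IsOpen (Projectivization.mk' K ⁻¹' (Projectivization.mk' K '' U))
  have key : Projectivization.mk' K ⁻¹' (Projectivization.mk' K '' U) =
      ⋃ a : Kˣ, (fun v : {v : V // v ≠ 0} =>
        (⟨a • (v : V), (smul_ne_zero_iff_ne a).2 v.2⟩ : {v : V // v ≠ 0})) ⁻¹' U := by
    ext v
    simp only [mem_preimage, mem_image, mem_iUnion]
    constructor
    · rintro ⟨w, hw, hwv⟩
      obtain ⟨a, ha⟩ := (Projectivization.mk_eq_mk_iff K (w : V) v w.2 v.2).1 hwv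
      refine ⟨a, ?_⟩
      convert hw
    · rintro ⟨a, ha⟩
      exact ⟨_, ha, (Projectivization.mk_eq_mk_iff K _ _ _ _).2 ⟨a, rfl⟩⟩
  rw [key]
  refine isOpen_iUnion fun a => hU.preimage ?_
  exact Continuous.subtype_mk (continuous_subtype_val.const_smul (a : K)) _

theorem rep_mk_mem_iff {K V : Type*} [DivisionRing K] [AddCommGroup V] [Module K V]
    (W : Submodule K V) (v : V) (hv : v ≠ 0) :
    (Projectivization.mk K v hv).rep ∈ W ↔ v ∈ W := by
  obtain ⟨a, ha⟩ := Projectivization.exists_smul_eq_mk_rep K v hv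
  rw [← ha]
  exact W.smul_mem_iff' a

/-! ### The cone over a convex subset of real projective space -/

variable {n : ℕ}

/-- The set of nonzero vectors representing a point of `D`. -/
def liftSet (D : Set (RP n)) : Set (RV n) :=
  {v | ∃ h : v ≠ 0, Projectivization.mk ℝ v h ∈ D}

theorem smul_mem_liftSet {D : Set (RP n)} {v : RV n} (hv : v ∈ liftSet D) {a : ℝ} (ha : a ≠ 0) :
    a • v ∈ liftSet D := by
  obtain ⟨h, hD⟩ := hv
  refine ⟨smul_ne_zero ha h, ?_⟩
  rwa [(Projectivization.mk_eq_mk_iff' ℝ (a • v) v _ h).2 ⟨a, rfl⟩]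

theorem smul_mem_liftSet_iff {D : Set (RP n)} {v : RV n} {a : ℝ} (ha : a ≠ 0) :
    a • v ∈ liftSet D ↔ v ∈ liftSet D := by
  refine ⟨fun h => ?_, fun h => smul_mem_liftSet h ha⟩
  simpa [smul_smul, inv_mul_cancel₀ ha] using smul_mem_liftSet h (inv_ne_zero ha)

theorem neg_mem_liftSet {D : Set (RP n)} {v : RV n} (hv : v ∈ liftSet D) : -v ∈ liftSet D := by
  simpa using smul_mem_liftSet hv (neg_ne_zero.2 (one_ne_zero (α := ℝ)))

theorem zero_notMem_liftSet {D : Set (RP n)} : (0 : RV n) ∉ liftSet D := fun h => h.1 rfl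

theorem isOpen_liftSet {D : Set (RP n)} (hD : IsOpen D) : IsOpen (liftSet D) := by
  have h := hD.preimage (isOpenQuotientMap_mk' (K := ℝ) (V := RV n)).continuous
  have h2 := isOpen_ne.isOpenMap_subtype_val _ h
  convert h2 using 1
  ext v
  simp [liftSet, Projectivization.mk'_eq_mk]

/-- A nonnegative combination that lies on a ray through the segment `[u, v] ⊆ liftSet D`. -/
theorem add_mem_liftSet {D : Set (RP n)} {u v : RV n} (h : segment ℝ u v ⊆ liftSet D)
    {a b : ℝ} (ha : 0 ≤ a) (hb : 0 ≤ b) (hab : 0 < a + b) : a • u + b • v ∈ liftSet D := by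
  have h1 : (a / (a + b)) • u + (b / (a + b)) • v ∈ liftSet D :=
    h ⟨_, _, by positivity, by positivity, by field_simp, rfl⟩
  have h2 := smul_mem_liftSet h1 hab.ne'
  convert h2 using 1
  rw [smul_add, smul_smul, smul_smul, mul_div_cancel₀ _ hab.ne', mul_div_cancel₀ _ hab.ne']

theorem exists_coordinate {u v : RV n} (hu : ∀ a : ℝ, u ≠ a • v) :
    ∃ f : RV n →ₗ[ℝ] ℝ, f u = 1 ∧ f v = 0 := by
  have hn : u ∉ Submodule.span ℝ {v} := fun h => by
    obtain ⟨a, ha⟩ := Submodule.mem_span_singleton.1 h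
    exact hu a ha.symm
  obtain ⟨f, hf, hfv⟩ := Submodule.exists_dual_map_eq_bot_of_notMem hn inferInstance
  refine ⟨(f u)⁻¹ • f, by simp [hf], ?_⟩
  have : f v ∈ (Submodule.span ℝ {v}).map f :=
    Submodule.mem_map_of_mem (Submodule.mem_span_singleton_self v)
  rw [hfv] at this
  simp [(Submodule.mem_bot ℝ).1 this]

theorem isLineR_span {u v : RV n} (hu : ∀ a : ℝ, u ≠ a • v) (hv : v ≠ 0) :
    isLineR {x : RP n | x.rep ∈ Submodule.span ℝ {u, v}} := by
  refine ⟨_, ?_, rfl⟩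
  have hli : LinearIndependent ℝ ![v, u] :=
    (LinearIndependent.pair_iff' hv).2 fun a h => hu a h.symm
  have := finrank_span_eq_card hli
  rwa [Matrix.range_cons_cons_empty, Set.pair_comm, Fintype.card_fin] at this

theorem not_both_segments {D : Set (RP n)} (hDc : convexR D) {u v : RV n}
    (h₁ : segment ℝ u v ⊆ liftSet D) (h₂ : segment ℝ u (-v) ⊆ liftSet D) : False := by
  have hu : u ∈ liftSet D := h₁ (left_mem_segment ℝ u v)
  have hv : v ∈ liftSet D := h₁ (right_mem_segment ℝ u v)
  by_cases hdep : ∀ a : ℝ, u ≠ a • v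
  · refine hDc.1 _ (isLineR_span hdep hv.1) fun x hx => ?_
    obtain ⟨a, b, hab⟩ := Submodule.mem_span_pair.1 hx
    have hmem : x.rep ∈ liftSet D := by
      have hne : ¬(a = 0 ∧ b = 0) := by
        rintro ⟨rfl, rfl⟩
        exact x.rep_nonzero (by simpa using hab.symm)
      rw [← hab]
      rcases le_total 0 a with ha | ha <;> rcases le_total 0 b with hb | hb
      · exact add_mem_liftSet h₁ ha hb (by grind)
      · simpa using add_mem_liftSet h₂ ha (neg_nonneg.2 hb) (by grind)
      · have := neg_mem_liftSet (add_mem_liftSet h₂ (neg_nonneg.2 ha) hb (by grind))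
        simpa [add_comm] using this
      · have := neg_mem_liftSet
          (add_mem_liftSet h₁ (neg_nonneg.2 ha) (neg_nonneg.2 hb) (by grind))
        simpa [add_comm] using this
    obtain ⟨h, hD⟩ := hmem
    rwa [Projectivization.mk_rep] at hD
  · push Not at hdep
    obtain ⟨a, rfl⟩ := hdep
    rcases le_total 0 a with ha | ha
    · have := add_mem_liftSet h₂ zero_le_one ha (by linarith)
      exact zero_notMem_liftSet (by simpa using this)
    · have := add_mem_liftSet h₁ zero_le_one (neg_nonneg.2 ha) (by linarith)
      exact zero_notMem_liftSet (by simpa using this)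

theorem mul_rep_mk_pos_iff (f g : RV n →ₗ[ℝ] ℝ) (v : RV n) (hv : v ≠ 0) :
    0 < f (Projectivization.mk ℝ v hv).rep * g (Projectivization.mk ℝ v hv).rep ↔
      0 < f v * g v := by
  obtain ⟨a, ha⟩ := Projectivization.exists_smul_eq_mk_rep ℝ v hv
  have ha0 : (0 : ℝ) < a * a := mul_self_pos.2 a.ne_zero
  have ha' : (Projectivization.mk ℝ v hv).rep = (a : ℝ) • v := ha.symm
  rw [ha', map_smul, map_smul, smul_eq_mul, smul_eq_mul, mul_mul_mul_comm]
  exact mul_pos_iff_of_pos_left ha0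

theorem isOpen_pos_mul (f g : RV n →ₗ[ℝ] ℝ) : IsOpen {x : RP n | 0 < f x.rep * g x.rep} := by
  rw [← (isOpenQuotientMap_mk' (K := ℝ) (V := RV n)).isQuotientMap.isOpen_preimage]
  have hf : Continuous f := f.continuous_of_finiteDimensional
  have hg : Continuous g := g.continuous_of_finiteDimensional
  have : IsOpen {v : {v : RV n // v ≠ 0} | 0 < f v * g v} :=
    isOpen_lt continuous_const (by fun_prop)
  convert this using 1
  ext v
  exact mul_rep_mk_pos_iff f g v v.2

theorem segment_or_segment_neg {D : Set (RP n)} (hDc : convexR D) {u v : RV n}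
    (hu : u ∈ liftSet D) (hv : v ∈ liftSet D) :
    segment ℝ u v ⊆ liftSet D ∨ segment ℝ u (-v) ⊆ liftSet D := by
  by_cases hdep : ∀ a : ℝ, u ≠ a • v
  · by_contra! hcon
    obtain ⟨h₁, h₂⟩ := hcon
    obtain ⟨_, ⟨a, b, ha, hb, hab, rfl⟩, hp⟩ := not_subset.1 h₁
    obtain ⟨_, ⟨c, d, hc, hd, hcd, rfl⟩, hq⟩ := not_subset.1 h₂
    have hdep' : ∀ a : ℝ, v ≠ a • u := fun a h => by
      have ha : a ≠ 0 := by
        rintro rfl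
        exact hv.1 (by simpa using h)
      exact hdep a⁻¹ (by rw [h, smul_smul, inv_mul_cancel₀ ha, one_smul])
    have pos : ∀ {s t : ℝ} {w : RV n}, 0 ≤ s → s + t = 1 → w ∈ liftSet D →
        s • u + t • w ∉ liftSet D → 0 < s := fun {s t w} hs hst hw h => by
      refine hs.lt_of_ne ?_
      rintro rfl
      obtain rfl : t = 1 := by linarith
      exact h (by simpa using hw)
    have pos' : ∀ {s t : ℝ} {w : RV n}, 0 ≤ t → s + t = 1 →
        s • u + t • w ∉ liftSet D → 0 < t := fun {s t w} ht hst h => by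
      refine ht.lt_of_ne ?_
      rintro rfl
      obtain rfl : s = 1 := by linarith
      exact h (by simpa using hu)
    replace ha := pos ha hab hv hp
    replace hb := pos' hb hab hp
    replace hc := pos hc hcd (neg_mem_liftSet hv) hq
    replace hd := pos' hd hcd hq
    obtain ⟨f, hfu, hfv⟩ := exists_coordinate hdep
    obtain ⟨g, hgv, hgu⟩ := exists_coordinate hdep'
    let φ : RV n →ₗ[ℝ] ℝ := b • f - a • g
    let ψ : RV n →ₗ[ℝ] ℝ := d • f + c • g
    have hpre := hDc.2 _ (isLineR_span hdep hv.1)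
    have hmem : ∀ {w : RV n} (hw : w ∈ liftSet D), w ∈ Submodule.span ℝ {u, v} →
        Projectivization.mk ℝ w hw.1 ∈
          D ∩ {x : RP n | x.rep ∈ Submodule.span ℝ {u, v}} := fun {w} hw hws =>
      ⟨hw.2, (rep_mk_mem_iff _ w hw.1).2 hws⟩
    obtain ⟨x, -, hx₁, hx₂⟩ := hpre _ _ (isOpen_pos_mul φ ψ) (isOpen_pos_mul (-φ) ψ) (by
      rintro x ⟨hxD, hx⟩
      obtain ⟨s, t, hst⟩ := Submodule.mem_span_pair.1 hx
      have hxl : x.rep ∈ liftSet D := ⟨x.rep_nonzero, by rwa [Projectivization.mk_rep]⟩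
      have hφ : φ x.rep = b * s - a * t := by simp [φ, ← hst, hfu, hfv, hgu, hgv]
      have hψ : ψ x.rep = d * s + c * t := by simp [ψ, ← hst, hfu, hfv, hgu, hgv]
      have hφ0 : φ x.rep ≠ 0 := fun h => by
        rw [hφ] at h
        have : x.rep = (s / a) • (a • u + b • v) := by
          rw [← hst, smul_add, smul_smul, smul_smul, div_mul_cancel₀ _ ha.ne']
          congr 2
          field_simp
          linarith
        have hs : s / a ≠ 0 := fun h0 => x.rep_nonzero (by rw [this, h0, zero_smul])
        rw [this, smul_mem_liftSet_iff hs] at hxl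
        exact hp hxl
      have hψ0 : ψ x.rep ≠ 0 := fun h => by
        rw [hψ] at h
        have : x.rep = (s / c) • (c • u + d • -v) := by
          rw [← hst, smul_add, smul_smul, smul_smul, div_mul_cancel₀ _ hc.ne', smul_neg, ← neg_smul]
          congr 2
          field_simp
          linarith
        have hs : s / c ≠ 0 := fun h0 => x.rep_nonzero (by rw [this, h0, zero_smul])
        rw [this, smul_mem_liftSet_iff hs] at hxl
        exact hq hxl
      rcases (mul_ne_zero hφ0 hψ0).lt_or_gt with h | h
      · right
        simpa using h
      · left
        exact h)
      ⟨_, hmem hu (Submodule.subset_span (by simp)), (mul_rep_mk_pos_iff _ _ _ _).2 (by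
        simpa [φ, ψ, hfu, hgu] using mul_pos hb hd)⟩
      ⟨_, hmem hv (Submodule.subset_span (by simp)), (mul_rep_mk_pos_iff _ _ _ _).2 (by
        simpa [φ, ψ, hfv, hgv] using mul_pos ha hc)⟩
    simp only [mem_ofPred_eq, LinearMap.neg_apply] at hx₁ hx₂
    linarith
  · push Not at hdep
    obtain ⟨a, rfl⟩ := hdep
    have ha : a ≠ 0 := by
      rintro rfl
      exact hu.1 (zero_smul _ _)
    rcases ha.lt_or_gt with ha | ha
    · right
      rintro _ ⟨s, t, hs, ht, hst, rfl⟩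
      have : s • a • v + t • -v = (s * a - t) • v := by module
      rw [this]
      refine smul_mem_liftSet hv (ne_of_lt ?_)
      rcases hs.eq_or_lt with rfl | hs
      · linarith
      · nlinarith
    · left
      rintro _ ⟨s, t, hs, ht, hst, rfl⟩
      have : s • a • v + t • v = (s * a + t) • v := by module
      rw [this]
      refine smul_mem_liftSet hv (ne_of_gt ?_)
      rcases hs.eq_or_lt with rfl | hs
      · linarith
      · nlinarith

/-- One of the two components of the set of vectors over `D`. -/
structure IsHalfCone (D : Set (RP n)) (C : Set (RV n)) : Prop where
  isOpen : IsOpen C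
  convex : Convex ℝ C
  smul_mem : ∀ {v : RV n}, v ∈ C → ∀ {t : ℝ}, 0 < t → t • v ∈ C
  subset : C ⊆ liftSet D
  mem_or_neg_mem : ∀ {v : RV n}, v ∈ liftSet D → v ∈ C ∨ -v ∈ C
  neg_notMem : ∀ {v : RV n}, v ∈ C → -v ∉ C

theorem subset_of_isPreconnected {D : Set (RP n)} {C A : Set (RV n)} (hC : IsOpen C)
    (hor : ∀ {v : RV n}, v ∈ liftSet D → v ∈ C ∨ -v ∈ C)
    (hneg : ∀ {v : RV n}, v ∈ C → -v ∉ C)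
    (hA : IsPreconnected A) (hAD : A ⊆ liftSet D) (hAC : (A ∩ C).Nonempty) : A ⊆ C :=
  hA.subset_left_of_subset_union hC (hC.preimage continuous_neg)
    (Set.disjoint_left.2 fun _ h => hneg h) (fun _ hv => hor (hAD hv)) hAC

theorem isPreconnected_segment (u v : RV n) : IsPreconnected (segment ℝ u v) :=
  (convex_segment u v).isPreconnected

theorem exists_isHalfCone {D : Set (RP n)} (hDo : IsOpen D) (hDc : convexR D)
    (hne : D.Nonempty) : ∃ C : Set (RV n), IsHalfCone D C := by
  obtain ⟨x, hx⟩ := hne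
  have hu : x.rep ∈ liftSet D := ⟨x.rep_nonzero, by rwa [Projectivization.mk_rep]⟩
  set u := x.rep
  have hopen : IsOpen {v | segment ℝ u v ⊆ liftSet D} := by
    rw [isOpen_iff_eventually]
    intro v hv
    have hcomp : IsCompact (Icc (0 : ℝ) 1) := isCompact_Icc
    have := hcomp.eventually_forall_of_forall_eventually (x₀ := v)
      (P := fun w t => AffineMap.lineMap u w t ∈ liftSet D) (fun t ht => by
        have hcont : Continuous fun z : RV n × ℝ => (AffineMap.lineMap u z.1 z.2 : RV n) := by
          simp only [AffineMap.lineMap_apply_module]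
          fun_prop
        refine hcont.continuousAt.eventually_mem ((isOpen_liftSet hDo).mem_nhds ?_)
        apply hv
        rw [segment_eq_image_lineMap]
        exact ⟨t, ht, rfl⟩)
    filter_upwards [this] with w hw
    rw [segment_eq_image_lineMap]
    rintro _ ⟨t, ht, rfl⟩
    exact hw t ht
  have hsub : {v | segment ℝ u v ⊆ liftSet D} ⊆ liftSet D := fun v hv =>
    hv (right_mem_segment ℝ u v)
  have hor : ∀ {v : RV n}, v ∈ liftSet D →
      v ∈ {v | segment ℝ u v ⊆ liftSet D} ∨ -v ∈ {v | segment ℝ u v ⊆ liftSet D} :=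
    fun hv => segment_or_segment_neg hDc hu hv
  have hneg : ∀ {v : RV n}, v ∈ {v | segment ℝ u v ⊆ liftSet D} →
      -v ∉ {v | segment ℝ u v ⊆ liftSet D} := fun h₁ h₂ => not_both_segments hDc h₁ h₂
  generalize {v | segment ℝ u v ⊆ liftSet D} = C at *
  refine ⟨C, hopen, ?_, ?_, hsub, hor, hneg⟩
  · rw [convex_iff_segment_subset]
    intro v hv w hw
    rcases segment_or_segment_neg hDc (hsub hv) (hsub hw) with h | h
    · exact subset_of_isPreconnected hopen hor hneg (isPreconnected_segment v w) h
        ⟨v, left_mem_segment ℝ v w, hv⟩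
    · have := subset_of_isPreconnected hopen hor hneg (isPreconnected_segment v (-w)) h
        ⟨v, left_mem_segment ℝ v (-w), hv⟩
      exact absurd (this (right_mem_segment ℝ v (-w))) (hneg hw)
  · intro v hv t ht
    refine subset_of_isPreconnected hopen hor hneg (isPreconnected_segment v (t • v)) ?_
      ⟨v, left_mem_segment ℝ _ _, hv⟩ (right_mem_segment ℝ _ _)
    rintro _ ⟨a, b, ha, hb, hab, rfl⟩
    have : a • v + b • t • v = (a + b * t) • v := by module
    rw [this]
    refine smul_mem_liftSet (hsub hv) (ne_of_gt ?_)
    rcases hb.eq_or_lt with rfl | hb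
    · linarith
    · nlinarith [mul_pos hb ht]

namespace IsHalfCone

variable {D : Set (RP n)} {C : Set (RV n)}

theorem combo_mem (hC : IsHalfCone D C) {v w : RV n} (hv : v ∈ C) (hw : w ∈ C) {a b : ℝ}
    (ha : 0 ≤ a) (hb : 0 ≤ b) (hab : 0 < a + b) : a • v + b • w ∈ C := by
  have h := hC.smul_mem (hC.convex hv hw (div_nonneg ha hab.le) (div_nonneg hb hab.le)
    (by field_simp)) hab
  rwa [smul_add, smul_smul, smul_smul, mul_div_cancel₀ _ hab.ne', mul_div_cancel₀ _ hab.ne'] at h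

theorem zero_notMem (hC : IsHalfCone D C) : (0 : RV n) ∉ C := fun h =>
  zero_notMem_liftSet (hC.subset h)

theorem realSeg_subset (hC : IsHalfCone D C) {v w : RV n} (hv : v ∈ C) (hw : w ∈ C) :
    realSeg v w ⊆ D := by
  rintro _ ⟨a, b, hab, h, rfl⟩
  have hseg : segment ℝ v w ⊆ liftSet D := (hC.convex.segment_subset hv hw).trans hC.subset
  have hne : ¬(a = 0 ∧ b = 0) := by
    rintro ⟨rfl, rfl⟩
    simp at h
  suffices a • v + b • w ∈ liftSet D from this.2
  rcases mul_nonneg_iff.1 hab with ⟨ha, hb⟩ | ⟨ha, hb⟩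
  · exact add_mem_liftSet hseg ha hb (by grind)
  · have := neg_mem_liftSet
      (add_mem_liftSet hseg (neg_nonneg.2 ha) (neg_nonneg.2 hb) (by grind))
    simpa [add_comm] using this

end IsHalfCone

/-! ### The elliptic tube as the image of the complex cone `C + iC` -/

/-- The set `C + iC` of complex vectors. -/
def complexCone (C : Set (RV n)) : Set (CV n) :=
  {k | (fun i => (k i).re) ∈ C ∧ (fun i => (k i).im) ∈ C}

theorem isOpen_complexCone {C : Set (RV n)} (hC : IsOpen C) : IsOpen (complexCone C) :=
  (hC.preimage (by fun_prop : Continuous fun (k : CV n) i => (k i).re)).inter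
    (hC.preimage (by fun_prop : Continuous fun (k : CV n) i => (k i).im))

theorem convex_complexCone {C : Set (RV n)} (hC : Convex ℝ C) : Convex ℝ (complexCone C) := by
  intro k hk l hl a b ha hb hab
  refine ⟨?_, ?_⟩
  · convert hC hk.1 hl.1 ha hb hab using 1
    ext i
    simp
  · convert hC hk.2 hl.2 ha hb hab using 1
    ext i
    simp

theorem combo_mem_complexCone {C : Set (RV n)} {v w : RV n} {c d : ℂ}
    (hre : c.re • v + d.re • w ∈ C) (him : c.im • v + d.im • w ∈ C) :
    c • cplx v + d • cplx w ∈ complexCone C := by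
  refine ⟨?_, ?_⟩
  · convert hre using 1
    ext i
    simp [cplx]
  · convert him using 1
    ext i
    simp [cplx]

/-- The vector `c₀ v₀ + c₁ v₁` can be rotated into `C + iC` when the angle between `c₀` and `c₁`
is at most `π / 2`. -/
theorem IsHalfCone.exists_smul_mem {D : Set (RP n)} {C : Set (RV n)} (hC : IsHalfCone D C)
    {v₀ v₁ : RV n} (hv₀ : v₀ ∈ C) (hv₁ : v₁ ∈ C) {c₀ c₁ : ℂ} (hc : 0 ≤ (c₀ * conj c₁).re)
    (hne : ¬(c₀ = 0 ∧ c₁ = 0)) :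
    ∃ a : ℂ, a • (c₀ • cplx v₀ + c₁ • cplx v₁) ∈ complexCone C := by
  have key : ∀ a : ℂ, 0 ≤ (a * c₀).re → 0 ≤ (a * c₁).re → 0 ≤ (a * c₀).im → 0 ≤ (a * c₁).im →
      0 < (a * c₀).re + (a * c₁).re → 0 < (a * c₀).im + (a * c₁).im →
      ∃ a : ℂ, a • (c₀ • cplx v₀ + c₁ • cplx v₁) ∈ complexCone C := by
    intro a h₁ h₂ h₃ h₄ h₅ h₆
    refine ⟨a, ?_⟩
    rw [smul_add, smul_smul, smul_smul]
    exact combo_mem_complexCone (hC.combo_mem hv₀ hv₁ h₁ h₂ h₅) (hC.combo_mem hv₀ hv₁ h₃ h₄ h₆)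
  have hc' : 0 ≤ c₀.re * c₁.re + c₀.im * c₁.im := by simpa using hc
  have sq_pos : ∀ c : ℂ, c ≠ 0 → 0 < c.re * c.re + c.im * c.im := fun c h => by
    simpa [Complex.normSq_apply] using Complex.normSq_pos.2 h
  rcases lt_trichotomy 0 (c₀.im * c₁.re - c₀.re * c₁.im) with h | h | h
  · have h1 := sq_pos c₁ (by rintro rfl; simp at h)
    apply key (conj c₁) <;> simp <;> linarith
  · rcases eq_or_ne c₁ 0 with rfl | h1
    · have h0 := sq_pos c₀ (by simpa using hne)
      apply key ((1 + Complex.I) * conj c₀) <;> simp <;> linarith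
    · have h1 := sq_pos c₁ h1
      apply key ((1 + Complex.I) * conj c₁) <;> simp <;> linarith
  · have h0 := sq_pos c₀ (by rintro rfl; simp at h)
    apply key (conj c₀) <;> simp <;> linarith

theorem IsHalfCone.exists_smul_mem_of_realSeg {D : Set (RP n)} {C : Set (RV n)}
    (hC : IsHalfCone D C) {v₀ v₁ : RV n} (hv₀ : v₀ ∈ C) (hseg : realSeg v₀ v₁ ⊆ D)
    {c₀ c₁ : ℂ} (hc : 0 ≤ (c₀ * conj c₁).re) (hne : c₀ • cplx v₀ + c₁ • cplx v₁ ≠ 0) :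
    ∃ a : ℂ, a • (c₀ • cplx v₀ + c₁ • cplx v₁) ∈ complexCone C := by
  by_cases hz : (0 : RV n) ∈ segment ℝ v₀ v₁
  · obtain ⟨a, b, ha, hb, hab, h⟩ := hz
    have h0 : v₀ ≠ 0 := (hC.subset hv₀).1
    have hb0 : b ≠ 0 := by
      rintro rfl
      simp [show a = 1 by linarith, h0] at h
    obtain ⟨r, rfl⟩ : ∃ r : ℝ, v₁ = r • v₀ := by
      refine ⟨-(b⁻¹ * a), ?_⟩
      have hbv : b • v₁ = -(a • v₀) := by
        rw [eq_neg_iff_add_eq_zero, add_comm]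
        exact h
      rw [← one_smul ℝ v₁, ← inv_mul_cancel₀ hb0, mul_smul, hbv]
      module
    have heq : c₀ • cplx v₀ + c₁ • cplx (r • v₀) =
        (c₀ + c₁ * r) • cplx v₀ + (0 : ℂ) • cplx v₀ := by
      ext i
      simp [cplx]
      ring
    rw [heq] at hne ⊢
    refine hC.exists_smul_mem hv₀ hv₀ (by simp) fun h => hne ?_
    rw [h.1]
    simp
  · have hsub : segment ℝ v₀ v₁ ⊆ liftSet D := by
      intro x hx
      have hx0 : x ≠ 0 := fun h => hz (h ▸ hx)
      obtain ⟨a, b, ha, hb, hab, rfl⟩ := hx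
      exact ⟨hx0, hseg ⟨a, b, mul_nonneg ha hb, hx0, rfl⟩⟩
    have hv₁ : v₁ ∈ C := subset_of_isPreconnected hC.isOpen hC.mem_or_neg_mem hC.neg_notMem
      (isPreconnected_segment v₀ v₁) hsub ⟨v₀, left_mem_segment ℝ _ _, hv₀⟩
      (right_mem_segment ℝ _ _)
    refine hC.exists_smul_mem hv₀ hv₁ hc ?_
    rintro ⟨rfl, rfl⟩
    simp at hne

theorem cplx_neg (v : RV n) : cplx (-v) = -cplx v := by
  ext i
  simp [cplx]

theorem realSeg_neg (v w : RV n) : realSeg (-v) (-w) = realSeg v w := by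
  have key : ∀ v w : RV n, realSeg (-v) (-w) ⊆ realSeg v w := by
    rintro v w _ ⟨a, b, hab, h, rfl⟩
    have : a • -v + b • -w = -a • v + -b • w := by module
    exact ⟨-a, -b, by linarith, this ▸ h, by simp only [this]⟩
  exact (key v w).antisymm (by simpa using key (-v) (-w))

theorem mk_mem_eTube_iff {D : Set (RP n)} {C : Set (RV n)} (hC : IsHalfCone D C) {z : CV n}
    (hz : z ≠ 0) :
    Projectivization.mk ℂ z hz ∈ eTube D ↔ ∃ a : ℂ, a • z ∈ complexCone C := by
  have zero_notMem : (0 : CV n) ∉ complexCone C := fun h => hC.zero_notMem h.1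
  simp only [eTube, mem_iUnion]
  constructor
  · rintro ⟨v₀, v₁, h0, -, hseg, c₀, c₁, hc, hne, heq⟩
    obtain ⟨b, hb⟩ := (Projectivization.mk_eq_mk_iff' ℂ _ _ hne hz).1 heq.symm
    have hv₀ : v₀ ∈ liftSet D := by
      have : (1 : ℝ) • v₀ + (0 : ℝ) • v₁ = v₀ := by simp
      refine ⟨h0, hseg ⟨1, 0, by simp, by rwa [this], by simp only [this]⟩⟩
    suffices ∃ a : ℂ, a • (c₀ • cplx v₀ + c₁ • cplx v₁) ∈ complexCone C by
      obtain ⟨a, ha⟩ := this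
      exact ⟨a * b, by rwa [mul_smul, hb]⟩
    rcases hC.mem_or_neg_mem hv₀ with hv | hv
    · exact hC.exists_smul_mem_of_realSeg hv hseg hc hne
    · obtain ⟨a, ha⟩ := hC.exists_smul_mem_of_realSeg hv
        (by rwa [realSeg_neg]) hc (by
          rw [cplx_neg, cplx_neg, smul_neg, smul_neg, ← neg_add]
          exact neg_ne_zero.2 hne)
      refine ⟨-a, ?_⟩
      convert ha using 1
      rw [cplx_neg, cplx_neg]
      module
  · rintro ⟨a, ha⟩
    have hne : a • z ≠ 0 := fun h => zero_notMem (h ▸ ha)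
    have heq : (1 : ℂ) • cplx (fun i => ((a • z) i).re) +
        Complex.I • cplx (fun i => ((a • z) i).im) = a • z := by
      ext i
      simp only [cplx, Pi.add_apply, Pi.smul_apply, smul_eq_mul, one_mul]
      rw [mul_comm Complex.I]
      exact Complex.re_add_im _
    refine ⟨_, _, (hC.subset ha.1).1, (hC.subset ha.2).1, hC.realSeg_subset ha.1 ha.2,
      1, Complex.I, by simp, by rwa [heq], ?_⟩
    simp only [heq]
    exact ((Projectivization.mk_eq_mk_iff' ℂ _ _ _ _).2 ⟨a, rfl⟩).symm

/-! ### Contractibility of the sections of the tube -/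

/-- The complex linear extension of a real functional. -/
def complexify (f : RV n →ₗ[ℝ] ℝ) : CV n →ₗ[ℂ] ℂ where
  toFun z := f (fun i => (z i).re) + f (fun i => (z i).im) * Complex.I
  map_add' z w := by
    have h1 : (fun i => ((z + w) i).re) = (fun i => (z i).re) + fun i => (w i).re := by
      ext i
      simp
    have h2 : (fun i => ((z + w) i).im) = (fun i => (z i).im) + fun i => (w i).im := by
      ext i
      simp
    rw [h1, h2, map_add, map_add]
    push_cast
    ring
  map_smul' c z := by
    have h1 : (fun i => ((c • z) i).re) = c.re • (fun i => (z i).re) - c.im • fun i => (z i).im := by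
      ext i
      simp
    have h2 : (fun i => ((c • z) i).im) = c.re • (fun i => (z i).im) + c.im • fun i => (z i).re := by
      ext i
      simp
    rw [h1, h2, map_sub, map_add, map_smul, map_smul, map_smul, map_smul]
    apply Complex.ext <;> simp

theorem exists_functional_ne_zero {D : Set (RP n)} {C : Set (RV n)} (hC : IsHalfCone D C) :
    ∃ ℓ : CV n →ₗ[ℂ] ℂ, ∀ k ∈ complexCone C, ℓ k ≠ 0 := by
  obtain ⟨f, hf⟩ := geometric_hahn_banach_open_point hC.convex hC.isOpen hC.zero_notMem
  refine ⟨complexify (f : RV n →ₗ[ℝ] ℝ), fun k hk h => ?_⟩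
  have h1 := hf _ hk.1
  have h2 := congrArg Complex.re h
  simp [complexify] at h1 h2
  linarith

theorem ContractibleSpace.of_retract {X Y : Type*} [TopologicalSpace X] [TopologicalSpace Y]
    [ContractibleSpace Y] (s : C(X, Y)) (r : C(Y, X)) (h : r.comp s = ContinuousMap.id X) :
    ContractibleSpace X := by
  rw [contractible_iff_id_nullhomotopic, ← h]
  have := ((id_nullhomotopic Y).comp_right r).comp_left s
  simpa using this

/-- A continuous choice of multiples lying in a convex open set. -/
theorem exists_continuous_smul_mem {T : Set (CV n)} (hTo : IsOpen T) (hTc : Convex ℝ T) :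
    ∃ g : C({w : CV n // ∃ a : ℂ, a • w ∈ T}, ℂ), ∀ w, g w • (w : CV n) ∈ T := by
  refine exists_continuous_forall_mem_convex_of_local_const
    (t := fun w : {w : CV n // ∃ a : ℂ, a • w ∈ T} => {a : ℂ | a • (w : CV n) ∈ T}) ?_ ?_
  · intro w a ha b hb s t hs ht hst
    have := hTc ha hb hs ht hst
    rwa [← smul_assoc, ← smul_assoc, ← add_smul] at this
  · rintro ⟨w, a, ha⟩
    refine ⟨a, ?_⟩
    have : Continuous fun y : {w : CV n // ∃ a : ℂ, a • w ∈ T} => a • (y : CV n) := by fun_prop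
    exact this.continuousAt.eventually_mem (hTo.mem_nhds ha)

theorem continuousAt_normalize (ℓ : CV n →ₗ[ℂ] ℂ) {p : CP n} (hp : ℓ p.rep ≠ 0) :
    ContinuousAt (fun p : CP n => (ℓ p.rep)⁻¹ • p.rep) p := by
  have hmk : p = Projectivization.mk' ℂ ⟨p.rep, p.rep_nonzero⟩ := p.mk_rep.symm
  have hℓ : Continuous ℓ := ℓ.continuous_of_finiteDimensional
  rw [hmk, ← isOpenQuotientMap_mk'.continuousAt_comp_iff]
  have : (fun p : CP n => (ℓ p.rep)⁻¹ • p.rep) ∘ Projectivization.mk' ℂ =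
      fun v : {v : CV n // v ≠ 0} => (ℓ v)⁻¹ • (v : CV n) := by
    ext1 v
    obtain ⟨a, ha⟩ := Projectivization.exists_smul_eq_mk_rep ℂ (v : CV n) v.2
    have ha' : (Projectivization.mk ℂ (v : CV n) v.2).rep = (a : ℂ) • (v : CV n) := ha.symm
    have ha0 : (a : ℂ) ≠ 0 := a.ne_zero
    simp only [Function.comp_apply, Projectivization.mk'_eq_mk, ha', map_smul, smul_eq_mul,
      smul_smul]
    congr 1
    rw [mul_inv, mul_right_comm, inv_mul_cancel₀ ha0, one_mul]
  rw [this]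
  exact ContinuousAt.smul ((hℓ.comp continuous_subtype_val).continuousAt.inv₀ hp)
    continuous_subtype_val.continuousAt

theorem contractibleSpace_eTube_inter {D : Set (RP n)} {C : Set (RV n)} (hC : IsHalfCone D C)
    (W : Submodule ℂ (CV n)) (hne : (eTube D ∩ {z : CP n | z.rep ∈ W}).Nonempty) :
    ContractibleSpace ↥(eTube D ∩ {z : CP n | z.rep ∈ W}) := by
  obtain ⟨ℓ, hℓ⟩ := exists_functional_ne_zero hC
  obtain ⟨g, hg⟩ := exists_continuous_smul_mem (isOpen_complexCone hC.isOpen)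
    (convex_complexCone hC.convex)
  have hmult : ∀ p ∈ eTube D, ∃ a : ℂ, a • p.rep ∈ complexCone C := fun p hp =>
    (mk_mem_eTube_iff hC p.rep_nonzero).1 (by rwa [Projectivization.mk_rep])
  have hℓ0 : ∀ p ∈ eTube D, ℓ p.rep ≠ 0 := fun p hp h => by
    obtain ⟨a, ha⟩ := hmult p hp
    exact hℓ _ ha (by rw [map_smul, h, smul_zero])
  let F : ↥(eTube D ∩ {z : CP n | z.rep ∈ W}) → {w : CV n // ∃ a : ℂ, a • w ∈ complexCone C} :=
    fun p => ⟨(ℓ p.1.rep)⁻¹ • p.1.rep, by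
      obtain ⟨a, ha⟩ := hmult p p.2.1
      refine ⟨a * ℓ p.1.rep, ?_⟩
      rwa [smul_smul, mul_assoc, mul_inv_cancel₀ (hℓ0 p p.2.1), mul_one]⟩
  have hF : Continuous F := by
    refine Continuous.subtype_mk (continuous_iff_continuousAt.2 fun p => ?_) _
    exact (continuousAt_normalize ℓ (hℓ0 p p.2.1)).comp continuous_subtype_val.continuousAt
  let K : Set (CV n) := complexCone C ∩ W
  have hK0 : ∀ k ∈ K, k ≠ 0 := fun k hk h => hℓ k hk.1 (by rw [h, map_zero])
  let s : C(↥(eTube D ∩ {z : CP n | z.rep ∈ W}), K) :=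
    ⟨fun p => ⟨g (F p) • (F p : CV n), hg (F p), W.smul_mem _ (W.smul_mem _ p.2.2)⟩, by fun_prop⟩
  let r : C(K, ↥(eTube D ∩ {z : CP n | z.rep ∈ W})) :=
    ⟨fun k => ⟨Projectivization.mk' ℂ ⟨k, hK0 k k.2⟩,
      (mk_mem_eTube_iff hC (hK0 k k.2)).2 ⟨1, by simpa using k.2.1⟩,
      (rep_mk_mem_iff W (k : CV n) (hK0 k k.2)).2 k.2.2⟩,
      (isOpenQuotientMap_mk'.continuous.comp
        (Continuous.subtype_mk continuous_subtype_val _)).subtype_mk _⟩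
  have hKc : Convex ℝ K :=
    (convex_complexCone hC.convex).inter (W.restrictScalars ℝ).convex
  have : ContractibleSpace K := hKc.contractibleSpace ⟨s ⟨_, hne.some_mem⟩, (s _).2⟩
  refine ContractibleSpace.of_retract s r ?_
  ext p
  change Projectivization.mk ℂ (g (F p) • (ℓ p.1.rep)⁻¹ • p.1.rep) _ = p.1
  conv_rhs => rw [← p.1.mk_rep]
  exact (Projectivization.mk_eq_mk_iff' ℂ _ _ _ _).2 ⟨_, mul_smul _ _ _⟩

theorem not_line_subset_eTube {D : Set (RP n)} {C : Set (RV n)} (hC : IsHalfCone D C)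
    {W : Submodule ℂ (CV n)} (hW : Module.finrank ℂ W = 2) :
    ¬ {z : CP n | z.rep ∈ W} ⊆ eTube D := by
  intro hsub
  obtain ⟨ℓ, hℓ⟩ := exists_functional_ne_zero hC
  have hker : LinearMap.ker (ℓ.comp W.subtype) ≠ ⊥ :=
    LinearMap.ker_ne_bot_of_finrank_lt (by rw [hW, Module.finrank_self]; norm_num)
  obtain ⟨w, hw, hw0⟩ := Submodule.exists_mem_ne_zero_of_ne_bot hker
  have hw0' : (w : CV n) ≠ 0 := by simpa using hw0
  obtain ⟨a, ha⟩ := (mk_mem_eTube_iff hC hw0').1 (hsub ((rep_mk_mem_iff W _ hw0').2 w.2))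
  refine hℓ _ ha ?_
  have : ℓ w = 0 := hw
  rw [map_smul, this, smul_zero]

theorem nonempty_of_eTube_nonempty {D : Set (RP n)} (h : (eTube D).Nonempty) : D.Nonempty := by
  obtain ⟨z, hz⟩ := h
  simp only [eTube, mem_iUnion] at hz
  obtain ⟨v₀, v₁, h0, -, hseg, -⟩ := hz
  have : (1 : ℝ) • v₀ + (0 : ℝ) • v₁ ≠ 0 := by simpa using h0
  exact ⟨_, hseg ⟨1, 0, by simp, this, rfl⟩⟩

end EllipticTube

/-- If `D ⊆ ℝℙⁿ` is an open convex set, then its elliptic tube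
`D^e ⊆ ℂℙⁿ` is ℂ-convex. -/
theorem eTube_cConvex_of_open_convex
    (n : ℕ) (D : Set (RP n)) (hDo : IsOpen D) (hDc : convexR D) :
    cConvex (eTube D) := by
  constructor
  · rintro _ ⟨W, hW, rfl⟩ hsub
    have : Nontrivial W := Module.nontrivial_of_finrank_pos (R := ℂ) (by omega)
    obtain ⟨w, hw⟩ := exists_ne (0 : W)
    have hw' : (w : CV n) ≠ 0 := by simpa using hw
    obtain ⟨C, hC⟩ := exists_isHalfCone hDo hDc
      (nonempty_of_eTube_nonempty ⟨_, hsub ((rep_mk_mem_iff W _ hw').2 w.2)⟩)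
    exact not_line_subset_eTube hC hW hsub
  · rintro _ ⟨W, -, rfl⟩
    rcases (eTube D ∩ {z : CP n | z.rep ∈ W}).eq_empty_or_nonempty with he | hne
    · rw [he]
      exact ⟨isPreconnected_empty, fun h => absurd h Set.not_nonempty_empty⟩
    · obtain ⟨C, hC⟩ := exists_isHalfCone hDo hDc
        (nonempty_of_eTube_nonempty (hne.mono Set.inter_subset_left))
      have := contractibleSpace_eTube_inter hC W hne
      exact ⟨isPreconnected_iff_preconnectedSpace.2 inferInstance, fun _ => inferInstance⟩
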